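/- For every n ≥ 1, the expected lengths of the shortest cycle of random n- and (n+1)-cyclations satisfy (2n+2)·Ex[T_n] ≤ (2n+1)·Ex[T_{n+1}]; equivalently the sequence (1/4^n)·binom(2n,n)·Ex[T_n] is nondecreasing in n. -/

import Mathlib

/-- The fixed involution pairing the two endpoints of each interval:
endpoint `2m` is paired with endpoint `2m+1`. -/
def intervalPerm (n : ℕ) : Equiv.Perm (Fin (2 * n)) :=
  Function.Involutive.toPerm
    (fun x => ⟨if x.1 % 2 = 0 then x.1 + 1 else x.1 - 1, by
      have := x.2; split <;> omega⟩)
    (fun x => by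
      have := x.2
      ext
      simp only
      split_ifs <;> omega)

/-- An `n`-cyclation: a fixed-point-free involution (perfect matching) on the `2*n`
endpoints of the `n` intervals. -/
def Cyclation (n : ℕ) : Type :=
  {μ : Equiv.Perm (Fin (2 * n)) // (∀ x, μ x ≠ x) ∧ μ * μ = 1}

instance (n : ℕ) : Finite (Cyclation n) := Subtype.finite

noncomputable instance (n : ℕ) : Fintype (Cyclation n) := Fintype.ofFinite _

/-- The subgroup generated by the matching and the interval pairing; its orbits on the
endpoints are exactly the connected components (cycles) of the cyclation, viewed as the
multigraph whose edges are the intervals together with the matched pairs. -/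
def cycGroup {n : ℕ} (c : Cyclation n) : Subgroup (Equiv.Perm (Fin (2 * n))) :=
  Subgroup.closure {c.1, intervalPerm n}

/-- Number of cycles of a cyclation: the number of connected components, i.e. the number
of orbits of `cycGroup c` on the endpoints. -/
noncomputable def cycNumCycles {n : ℕ} (c : Cyclation n) : ℕ :=
  Nat.card (MulAction.orbitRel.Quotient (cycGroup c) (Fin (2 * n)))

/-- Number of cycles of length `l` of a cyclation (a cycle containing `l` intervals is a
connected component with `2*l` endpoints). -/
noncomputable def cycNumCyclesOfLength {n : ℕ} (c : Cyclation n) (l : ℕ) : ℕ :=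
  Nat.card {q : MulAction.orbitRel.Quotient (cycGroup c) (Fin (2 * n)) // q.orbit.ncard = 2 * l}

/-- Length (number of intervals) of the longest cycle of a cyclation. -/
noncomputable def longestCycle {n : ℕ} (c : Cyclation n) : ℕ :=
  (Finset.univ.sup fun x : Fin (2 * n) => (MulAction.orbit (cycGroup c) x).ncard) / 2

/-- Length (number of intervals) of the shortest cycle of a cyclation. -/
noncomputable def shortestCycle {n : ℕ} (c : Cyclation n) : ℕ :=
  sInf (Set.range fun x : Fin (2 * n) => (MulAction.orbit (cycGroup c) x).ncard / 2)

/-- `Ex[M_n]`: the expected length of the longest cycle of a uniformly random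
`n`-cyclation, i.e. the average of the longest cycle length over all `n`-cyclations. -/
noncomputable def ExM (n : ℕ) : ℝ :=
  (∑ c : Cyclation n, (longestCycle c : ℝ)) / Fintype.card (Cyclation n)

/-- `Ex[T_n]`: the expected length of the shortest cycle of a uniformly random
`n`-cyclation, i.e. the average of the shortest cycle length over all `n`-cyclations. -/
noncomputable def ExT (n : ℕ) : ℝ :=
  (∑ c : Cyclation n, (shortestCycle c : ℝ)) / Fintype.card (Cyclation n)

/-- The exponential integral `E(x) = ∫_x^∞ e^{-y}/y dy`. -/
noncomputable def Efun (x : ℝ) : ℝ := ∫ y in Set.Ioi x, Real.exp (-y) / y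

/-!
Adding an interval to a cyclation either creates a new cycle of length one or lengthens a cycle at
one of its endpoints. On the cycle index this acts as multiplication by `X_2` plus a derivation, and
integrating along the characteristics of that operator shows that the generating function of the
numbers `v_n(l)` of `n`-cyclations with all cycles longer than `l`, divided by `2^n n!`, is
`V_l = exp (∑_{k > l} t^k / (2k))`. In particular `v_n(0) = binom(2n, n) / 4^n`, and since
`∑_l v_n(l) = v_n(0) Ex[T_n]`, both claims say that `∑_l v_n(l)` is nondecreasing in `n`.

The differential equation of `V_l` turns the increment of this sum into a comparison of
`2 ∑_l v_n(l)` with `∑_l v_{n-l}(l)`. By Abel summation the former is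
`2 ∑_l (l + 1) (v_n(l) - v_n(l+1))`, and the trapezoid rule for the exponential, applied
coefficientwise to `V_l / V_{l+1} = exp (t^{l+1} / (2 (l + 1)))`, bounds each of its terms by
`(v_{n-l-1}(l) + v_{n-l-1}(l+1)) / 2`. What is left is controlled by a telescoping estimate and the
growth of central binomial coefficients.
-/

section NonnegCoeff

open PowerSeries

variable {R : Type*} [CommRing R] [LinearOrder R]

/-- Nonnegativity of all coefficients of a power series; the order in which the generating
functions below are compared. -/
def NonnegCoeff (f : R⟦X⟧) : Prop :=
  ∀ n, 0 ≤ coeff n f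

variable [IsStrictOrderedRing R] {f g y E : R⟦X⟧}

namespace NonnegCoeff

lemma mul (hf : NonnegCoeff f) (hg : NonnegCoeff g) : NonnegCoeff (f * g) := fun n => by
  rw [coeff_mul]
  exact Finset.sum_nonneg fun p _ => mul_nonneg (hf p.1) (hg p.2)

lemma derivative (hf : NonnegCoeff f) : NonnegCoeff (d⁄dX R f) := fun n => by
  rw [coeff_derivative]
  exact mul_nonneg (hf _) (by positivity)

lemma of_derivative (h0 : 0 ≤ constantCoeff f) (hf : NonnegCoeff (d⁄dX R f)) : NonnegCoeff f
  | 0 => by simpa using h0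
  | n + 1 => by
    have hn := hf n
    rw [coeff_derivative] at hn
    exact nonneg_of_mul_nonneg_left hn (by positivity)

lemma of_derivative_eq_mul (hg : NonnegCoeff g) (h0 : 0 ≤ constantCoeff E)
    (hE : d⁄dX R E = g * E) : NonnegCoeff E := fun n => by
  induction n using Nat.strong_induction_on with
  | _ n ih =>
    cases n with
    | zero => simpa using h0
    | succ n =>
      have hn : coeff (n + 1) E * (n + 1) = coeff n (g * E) := by rw [← hE, coeff_derivative]
      have hnonneg : 0 ≤ coeff n (g * E) := by
        rw [coeff_mul]
        exact Finset.sum_nonneg fun p hp =>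
          mul_nonneg (hg p.1) (ih p.2 (Finset.Nat.antidiagonal.snd_lt hp))
      rw [← hn] at hnonneg
      exact nonneg_of_mul_nonneg_left hnonneg (by positivity)

/-- Here `E = exp y`, and the claim is the trapezoid rule
`∫₀¹ exp (s y) ds ≤ (1 + exp y) / 2` for the convex exponential, multiplied by `2 y`. -/
lemma trapezoid (hy : NonnegCoeff y) (hy0 : constantCoeff y = 0)
    (hE0 : constantCoeff E = 1) (hE : d⁄dX R E = d⁄dX R y * E) :
    NonnegCoeff (y * (E + 1) - 2 * (E - 1)) := by
  have hEnonneg : NonnegCoeff E := hy.derivative.of_derivative_eq_mul (by simp [hE0]) hE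
  have hslope : NonnegCoeff (1 - E + y * E) := by
    refine of_derivative (by simp [hy0, hE0]) ?_
    have hderiv : d⁄dX R (1 - E + y * E) = y * d⁄dX R y * E := by
      simp only [map_add, map_sub, Derivation.map_one_eq_zero, Derivation.leibniz, smul_eq_mul, hE]
      ring
    rw [hderiv]
    exact (hy.mul hy.derivative).mul hEnonneg
  refine of_derivative (by simp [hy0, hE0]) ?_
  have hderiv : d⁄dX R (y * (E + 1) - 2 * (E - 1)) = d⁄dX R y * (1 - E + y * E) := by
    simp only [two_mul, map_add, map_sub, Derivation.map_one_eq_zero, Derivation.leibniz,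
      smul_eq_mul, hE]
    ring
  rw [hderiv]
  exact hy.derivative.mul hslope

end NonnegCoeff

lemma derivative_mul_inv_eq_mul {K : Type*} [Field K] {F G a b : K⟦X⟧}
    (hG0 : constantCoeff G ≠ 0) (hF : d⁄dX K F = a * F) (hG : d⁄dX K G = b * G) :
    d⁄dX K (F * G⁻¹) = (a - b) * (F * G⁻¹) := by
  simp only [Derivation.leibniz, derivative_inv', smul_eq_mul, hF, hG]
  linear_combination (-b * F * G⁻¹) * PowerSeries.mul_inv_cancel G hG0

end NonnegCoeff

section Recurrence

open Finset

lemma sum_antidiagonal_leibniz {A : Type*} [CommSemiring A] (a p : ℕ → A) (n : ℕ) :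
    ∑ ij ∈ antidiagonal n,
        ((ij.1 + 1) * a (ij.1 + 1) * p ij.2 + a ij.1 * ((ij.2 + 1) * p (ij.2 + 1))) =
      (n + 1) * ∑ ij ∈ antidiagonal (n + 1), a ij.1 * p ij.2 := by
  have hsplit : ∀ ij ∈ antidiagonal (n + 1), ((n : A) + 1) * (a ij.1 * p ij.2) =
      ij.1 * a ij.1 * p ij.2 + a ij.1 * (ij.2 * p ij.2) := fun ij hij => by
    have hn : (n : A) + 1 = ij.1 + ij.2 := by
      rw [← Nat.cast_add, mem_antidiagonal.1 hij, Nat.cast_succ]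
    rw [hn]
    ring
  rw [mul_sum, sum_congr rfl hsplit, sum_add_distrib, sum_add_distrib,
    Nat.sum_antidiagonal_succ (f := fun ij => ij.1 * a ij.1 * p ij.2),
    Nat.sum_antidiagonal_succ' (f := fun ij => a ij.1 * (ij.2 * p ij.2))]
  simp

/-- For the generating functions the claim is `c dp/dt = a p`. The operator `d/dt - D / c`
annihilates `a`, so the recurrence `hp` is solved along its characteristics. -/
lemma sum_antidiagonal_of_derivation {R A : Type*} [CommRing R] [CommRing A] [Algebra R A]
    [IsDomain A] [CharZero A] (D : Derivation R A A) {c : ℕ} (hc : c ≠ 0) {a p : ℕ → A}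
    (ha : ∀ i, D (a i) = c * (i + 1) * a (i + 1)) (hp0 : D (p 0) = 0)
    (hp : ∀ n, c * (n + 1) * p (n + 1) = a 0 * p n + D (p n)) (n : ℕ) :
    c * (n + 1) * p (n + 1) = ∑ ij ∈ antidiagonal n, a ij.1 * p ij.2 := by
  induction n with
  | zero => simpa [hp0] using hp 0
  | succ n ih =>
    have hscalar : D (c * ((n : A) + 1)) = 0 := by
      exact_mod_cast D.map_natCast (c * (n + 1))
    have hD : c * ((n : A) + 1) * D (p (n + 1)) =
        ∑ ij ∈ antidiagonal n, (c * (ij.1 + 1) * a (ij.1 + 1) * p ij.2 +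
          a ij.1 * (c * (ij.2 + 1) * p (ij.2 + 1) - a 0 * p ij.2)) := by
      have h := congrArg D ih
      rw [Derivation.leibniz, hscalar, smul_zero, add_zero, smul_eq_mul, map_sum] at h
      rw [h]
      refine sum_congr rfl fun ij _ => ?_
      rw [Derivation.leibniz, ha, hp, smul_eq_mul, smul_eq_mul]
      ring
    have hne : (c * (n + 1) : A) ≠ 0 := by exact_mod_cast mul_ne_zero hc n.succ_ne_zero
    refine mul_left_cancel₀ hne ?_
    calc c * (n + 1) * (c * ((n + 1 : ℕ) + 1) * p (n + 1 + 1))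
        = a 0 * (c * (n + 1) * p (n + 1)) + c * (n + 1) * D (p (n + 1)) := by rw [hp]; ring
      _ = c * ∑ ij ∈ antidiagonal n,
            ((ij.1 + 1) * a (ij.1 + 1) * p ij.2 + a ij.1 * ((ij.2 + 1) * p (ij.2 + 1))) := by
          rw [ih, hD, mul_sum, mul_sum, ← sum_add_distrib]
          exact sum_congr rfl fun ij _ => by ring
      _ = c * (n + 1) * ∑ ij ∈ antidiagonal (n + 1), a ij.1 * p ij.2 := by
          rw [sum_antidiagonal_leibniz, mul_assoc]

end Recurrence

section Labelling

open Equiv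

universe u

variable {α : Type u} {β Q R : Type*} {σ τ : Perm α} {f : α → Q} {g : α → R}

/-- A labelling of `α` by `Q` whose fibres are exactly the orbits of the group generated by `σ` and
`τ`. Connectedness of the fibres is encoded by invariant sets being unions of fibres. -/
structure IsOrbitLabelling (σ τ : Perm α) (f : α → Q) : Prop where
  surjective : Function.Surjective f
  apply_left : ∀ a, f (σ a) = f a
  apply_right : ∀ a, f (τ a) = f a
  mem_of_eq : ∀ s : Set α, (∀ a ∈ s, σ a ∈ s) → (∀ a ∈ s, τ a ∈ s) →
    ∀ a b, f a = f b → a ∈ s → b ∈ s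

lemma isOrbitLabelling_mk [Finite α] (σ τ : Perm α) :
    IsOrbitLabelling σ τ (fun a => (Quotient.mk'' a :
      MulAction.orbitRel.Quotient (Subgroup.closure {σ, τ}) α)) where
  surjective := Quotient.mk''_surjective
  apply_left _ := Quotient.sound' ⟨⟨σ, Subgroup.subset_closure (by simp)⟩, rfl⟩
  apply_right _ := Quotient.sound' ⟨⟨τ, Subgroup.subset_closure (by simp)⟩, rfl⟩
  mem_of_eq s hσ hτ a b hab ha := by
    have hinvariant : ∀ ρ ∈ Submonoid.closure {σ, τ}, ∀ x ∈ s, ρ x ∈ s := fun ρ hρ => by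
      induction hρ using Submonoid.closure_induction with
      | mem ρ hρ => rcases hρ with rfl | rfl <;> assumption
      | one => exact fun x hx => hx
      | mul _ _ _ _ h₁ h₂ => exact fun x hx => h₁ _ (h₂ x hx)
    obtain ⟨⟨ρ, hρ⟩, rfl⟩ := Quotient.exact' hab.symm
    rw [← Subgroup.mem_toSubmonoid, Subgroup.closure_toSubmonoid_of_finite] at hρ
    exact hinvariant ρ hρ a ha

namespace IsOrbitLabelling

lemma eq_of_eq (hf : IsOrbitLabelling σ τ f) (hg : IsOrbitLabelling σ τ g) {a b : α}
    (h : f a = f b) : g b = g a :=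
  hf.mem_of_eq {x | g x = g a} (fun x hx => (hg.apply_left x).trans hx)
    (fun x hx => (hg.apply_right x).trans hx) a b h rfl

lemma prod_ncard_fiber {M : Type*} [CommMonoid M] [Fintype Q] [Fintype R]
    (hf : IsOrbitLabelling σ τ f) (hg : IsOrbitLabelling σ τ g) (w : ℕ → M) :
    ∏ q, w (f ⁻¹' {q}).ncard = ∏ r, w (g ⁻¹' {r}).ncard := by
  have hsection : ∀ q, f (Function.surjInv hf.surjective q) = q :=
    Function.surjInv_eq hf.surjective
  refine Fintype.prod_bijective (fun q => g (Function.surjInv hf.surjective q)) ⟨?_, ?_⟩ _ _ ?_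
  · intro q q' h
    rw [← hsection q, ← hsection q', hg.eq_of_eq hf h]
  · intro r
    obtain ⟨a, rfl⟩ := hg.surjective r
    exact ⟨f a, hf.eq_of_eq hg (hsection _).symm⟩
  · intro q
    congr 2
    ext a
    exact ⟨fun h => hf.eq_of_eq hg ((hsection q).trans h.symm),
      fun h => (hg.eq_of_eq hf h).symm.trans (hsection q)⟩

lemma permCongr (hf : IsOrbitLabelling σ τ f) (e : α ≃ β) :
    IsOrbitLabelling (e.permCongr σ) (e.permCongr τ) (f ∘ e.symm) where
  surjective := hf.surjective.comp e.symm.surjective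
  apply_left b := by simp [hf.apply_left]
  apply_right b := by simp [hf.apply_right]
  mem_of_eq s hσ hτ a b hab ha := by
    have h := hf.mem_of_eq (e ⁻¹' s) (fun x hx => by simpa using hσ (e x) hx)
      (fun x hx => by simpa using hτ (e x) hx) (e.symm a) (e.symm b) hab (by simpa using ha)
    simpa using h

end IsOrbitLabelling

/-- The cycle type monomial `∏ X_k` of a pair of permutations, `k` running over the sizes of the
orbits of the group they generate. For a cyclation a cycle of length `l` contributes `X_{2l}`. -/
noncomputable def cycleMonomial (σ τ : Perm α) : MvPolynomial ℕ ℝ :=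
  ∏ᶠ q : MulAction.orbitRel.Quotient (Subgroup.closure {σ, τ}) α, MvPolynomial.X q.orbit.ncard

lemma IsOrbitLabelling.cycleMonomial_eq [Finite α] [Fintype Q] (hf : IsOrbitLabelling σ τ f) :
    cycleMonomial σ τ = ∏ q, MvPolynomial.X (f ⁻¹' {q}).ncard := by
  have := Fintype.ofFinite (MulAction.orbitRel.Quotient (Subgroup.closure {σ, τ}) α)
  rw [cycleMonomial, finprod_eq_prod_of_fintype,
    hf.prod_ncard_fiber (isOrbitLabelling_mk σ τ) MvPolynomial.X]
  refine Finset.prod_congr rfl fun q _ => ?_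
  congr 2
  ext a
  exact MulAction.orbitRel.Quotient.mem_orbit

lemma exists_isOrbitLabelling [Finite α] (σ τ : Perm α) :
    ∃ (Q : Type u) (_ : Fintype Q) (f : α → Q), IsOrbitLabelling σ τ f :=
  ⟨_, Fintype.ofFinite _, _, isOrbitLabelling_mk σ τ⟩

lemma cycleMonomial_permCongr [Finite α] (σ τ : Perm α) (e : α ≃ β) :
    cycleMonomial (e.permCongr σ) (e.permCongr τ) = cycleMonomial σ τ := by
  obtain ⟨Q, _, f, hf⟩ := exists_isOrbitLabelling σ τ
  have := Finite.of_equiv α e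
  rw [(hf.permCongr e).cycleMonomial_eq, hf.cycleMonomial_eq]
  refine Finset.prod_congr rfl fun q _ => ?_
  rw [Set.preimage_comp, ← e.image_eq_preimage_symm, Set.ncard_image_of_injective _ e.injective]

lemma cycleMonomial_of_isEmpty [IsEmpty α] (σ τ : Perm α) : cycleMonomial σ τ = 1 := by
  rw [cycleMonomial, finprod_of_isEmpty]

lemma ncard_preimage_sumElim [Finite α] [Finite β] (f : α → Q) (g : β → Q) (s : Set Q) :
    (Sum.elim f g ⁻¹' s).ncard = (f ⁻¹' s).ncard + (g ⁻¹' s).ncard := by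
  rw [Set.preimage_sumElim, Set.ncard_union_eq Set.disjoint_image_inl_image_inr,
    Set.ncard_image_of_injective _ Sum.inl_injective,
    Set.ncard_image_of_injective _ Sum.inr_injective]

end Labelling

section Insertion

open Equiv Finset

variable {α β Q : Type*} {σ τ : Perm α} {f : α → Q}

/-- The permutation of `α ⊕ Fin 2` that acts as `σ` on `α` and swaps the two new points: it adds a
matched pair, or an interval, to an existing configuration. -/
abbrev adjoinPair (σ : Perm α) : Perm (α ⊕ Fin 2) :=
  Equiv.sumCongr σ (swap 0 1)

/-- A perfect matching of `α`, encoded as a fixed-point-free involution. -/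
abbrev Matching (α : Type*) : Type _ :=
  {μ : Perm α // (∀ x, μ x ≠ x) ∧ μ * μ = 1}

noncomputable instance [Finite α] : Fintype (Matching α) :=
  have : Finite (Matching α) := Subtype.finite
  Fintype.ofFinite _

namespace Matching

lemma apply_ne (c : Matching α) (a : α) : c.1 a ≠ a :=
  c.2.1 a

lemma apply_apply (c : Matching α) (a : α) : c.1 (c.1 a) = a :=
  DFunLike.congr_fun c.2.2 a

/-- Transport of matchings along a bijection of the underlying types. -/
def congr (e : α ≃ β) : Matching α ≃ Matching β :=
  e.permCongr.subtypeEquiv fun μ => and_congr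
    (e.forall_congr fun {x} => by simp)
    (by rw [← e.permCongrHom_coe, ← map_mul, map_eq_one_iff _ e.permCongrHom.injective])

@[simp]
lemma coe_congr (e : α ≃ β) (c : Matching α) : (congr e c).1 = e.permCongr c.1 :=
  rfl

/-- The matching `c` together with the new pair. -/
def adjoin (c : Matching α) : Matching (α ⊕ Fin 2) :=
  ⟨adjoinPair c.1, by
    constructor
    · rintro (a | j)
      · simpa using c.apply_ne a
      · fin_cases j <;> simp
    · ext (a | j)
      · simp [c.apply_apply]
      · simp⟩

@[simp]
lemma coe_adjoin (c : Matching α) : c.adjoin.1 = adjoinPair c.1 :=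
  rfl

lemma adjoin_injective : Function.Injective (adjoin (α := α)) := fun c d h => by
  have h' := congrArg Subtype.val h
  refine Subtype.ext (Equiv.ext fun a => Sum.inl_injective (β := Fin 2) ?_)
  exact DFunLike.congr_fun h' (Sum.inl a)

lemma exists_adjoin_eq [Finite α] (c : Matching (α ⊕ Fin 2)) (hc : c.1 (Sum.inr 1) = Sum.inr 0) :
    ∃ d : Matching α, d.adjoin = c := by
  have hc' : c.1 (Sum.inr 0) = Sum.inr 1 := by rw [← hc, c.apply_apply]
  have hmaps : Set.MapsTo c.1 (Set.range Sum.inr) (Set.range Sum.inr) := by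
    rintro _ ⟨j, rfl⟩
    fin_cases j
    exacts [⟨1, hc'.symm⟩, ⟨0, hc.symm⟩]
  obtain ⟨⟨σ, ρ⟩, hσρ⟩ := Perm.mem_sumCongrHom_range_of_perm_mapsTo_inl
    ((Perm.perm_mapsTo_inl_iff_mapsTo_inr c.1).2 hmaps)
  have hσ : ∀ a, c.1 (Sum.inl a) = Sum.inl (σ a) := fun a => by rw [← hσρ]; rfl
  refine ⟨⟨σ, fun a ha => c.apply_ne (Sum.inl a) (by rw [hσ, ha]), ?_⟩, ?_⟩
  · refine Equiv.ext fun a => Sum.inl_injective (β := Fin 2) ?_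
    rw [Perm.mul_apply, ← hσ, ← hσ, c.apply_apply, Perm.one_apply]
  · refine Subtype.ext (Equiv.ext ?_)
    rintro (a | j)
    · exact (hσ a).symm
    · fin_cases j
      exacts [hc'.symm, hc.symm]

/-- The position at which a new interval is inserted: on its own for `none`, at the endpoint `x`
for `some x`. -/
abbrev slot : Option α → α ⊕ Fin 2 :=
  fun o => o.elim (Sum.inr 0) Sum.inl

variable [DecidableEq α]

/-- Insertion of a new interval `Fin 2` into a matching: either it forms a cycle of its own, or the
pair `{x, c x}` is cut and reconnected as `{x, 1}` and `{c x, 0}`. -/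
def insert (p : Matching α × Option α) : Matching (α ⊕ Fin 2) :=
  congr (swap (slot p.2) (Sum.inr 0)) p.1.adjoin

lemma insert_none (c : Matching α) : insert (c, none) = c.adjoin := by
  refine Subtype.ext (Equiv.ext fun z => ?_)
  simp [insert, ← Perm.one_def]

lemma insert_some_inl_self (c : Matching α) (x : α) :
    (insert (c, some x)).1 (Sum.inl x) = Sum.inr 1 := by
  simp [insert, swap_apply_def]

lemma insert_some_inl_apply (c : Matching α) (x : α) :
    (insert (c, some x)).1 (Sum.inl (c.1 x)) = Sum.inr 0 := by
  simp [insert, swap_apply_def, c.apply_ne, c.apply_apply]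

lemma insert_some_inl_of_ne (c : Matching α) {x a : α} (hx : a ≠ x) (hcx : a ≠ c.1 x) :
    (insert (c, some x)).1 (Sum.inl a) = Sum.inl (c.1 a) := by
  have hca : c.1 a ≠ x := fun h => hcx (by rw [← h, c.apply_apply])
  simp [insert, swap_apply_def, hx, hca]

lemma insert_inr_one (p : Matching α × Option α) : (insert p).1 (Sum.inr 1) = slot p.2 := by
  obtain ⟨c, _ | x⟩ := p <;> simp [insert, swap_apply_def]

lemma insert_bijective [Finite α] : Function.Bijective (insert (α := α)) := by
  constructor
  · rintro ⟨c, o⟩ ⟨d, o'⟩ h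
    have hslot : slot o = slot o' := by
      rw [← insert_inr_one (c, o), ← insert_inr_one (d, o'), h]
    obtain rfl : o = o' := by
      rcases o with _ | x <;> rcases o' with _ | y <;> simp_all [slot]
    exact congrArg (·, o) (adjoin_injective ((congr (swap (slot o) (Sum.inr 0))).injective h))
  · intro g
    obtain ⟨o, ho⟩ : ∃ o, slot o = g.1 (Sum.inr 1) := by
      rcases hg : g.1 (Sum.inr 1) with x | j
      · exact ⟨some x, rfl⟩
      · fin_cases j
        · exact ⟨none, rfl⟩
        · exact absurd hg (g.apply_ne _)
    have hne : slot o ≠ Sum.inr 1 := ho.trans_ne (g.apply_ne _)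
    obtain ⟨d, hd⟩ := exists_adjoin_eq (congr (swap (slot o) (Sum.inr 0)) g) (by
      simp [swap_apply_of_ne_of_ne hne.symm, ← ho])
    refine ⟨(d, o), Subtype.ext (Equiv.ext fun z => ?_)⟩
    rw [insert, hd]
    simp

section Invariant

variable {c : Matching α} {x : α} {s : Set (α ⊕ Fin 2)}

lemma mem_iff_inl_mem_of_insert_invariant (hs : ∀ z ∈ s, (insert (c, some x)).1 z ∈ s)
    (hτ : ∀ z ∈ s, adjoinPair τ z ∈ s) (z : α ⊕ Fin 2) :
    z ∈ s ↔ Sum.inl (Sum.elim id (fun _ => x) z) ∈ s := by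
  have hinr : Sum.inr 0 ∈ s ↔ Sum.inr 1 ∈ s :=
    ⟨fun h => by simpa using hτ _ h, fun h => by simpa using hτ _ h⟩
  have hself : Sum.inr 1 ∈ s ↔ Sum.inl x ∈ s :=
    ⟨fun h => by simpa [insert_inr_one] using hs _ h,
      fun h => by simpa [insert_some_inl_self] using hs _ h⟩
  rcases z with a | j
  · rfl
  · fin_cases j
    exacts [hinr.trans hself, hself]

lemma inl_apply_mem_of_insert_invariant (hs : ∀ z ∈ s, (insert (c, some x)).1 z ∈ s)
    (hτ : ∀ z ∈ s, adjoinPair τ z ∈ s) {a : α} (ha : Sum.inl a ∈ s) : Sum.inl (c.1 a) ∈ s := by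
  have hnew : Sum.inr 0 ∈ s ↔ Sum.inl x ∈ s := mem_iff_inl_mem_of_insert_invariant hs hτ _
  have hmate : Sum.inl (c.1 x) ∈ s ↔ Sum.inr 0 ∈ s :=
    ⟨fun h => insert_some_inl_apply c x ▸ hs _ h, fun h => by
      have h' := hs _ h
      rwa [← insert_some_inl_apply c x, apply_apply] at h'⟩
  by_cases hx : a = x
  · rwa [hx, hmate, hnew, ← hx]
  by_cases hcx : a = c.1 x
  · rwa [hcx, c.apply_apply, ← hnew, ← hmate, ← hcx]
  · exact insert_some_inl_of_ne c hx hcx ▸ hs _ ha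

end Invariant

end Matching

namespace IsOrbitLabelling

lemma adjoinPair (hf : IsOrbitLabelling σ τ f) :
    IsOrbitLabelling (adjoinPair σ) (adjoinPair τ)
      (Sum.elim (fun a => some (f a)) fun _ => none) where
  surjective
    | none => ⟨Sum.inr 0, rfl⟩
    | some q => (hf.surjective q).imp' Sum.inl fun _ ha => congrArg some ha
  apply_left := by rintro (a | j) <;> simp [hf.apply_left]
  apply_right := by rintro (a | j) <;> simp [hf.apply_right]
  mem_of_eq s hσ hτ := by
    rintro (a | j) (b | k) hab ha
    · exact hf.mem_of_eq (Sum.inl ⁻¹' s) (fun _ => hσ _) (fun _ => hτ _) a b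
        (Option.some_injective _ hab) ha
    · simp at hab
    · simp at hab
    · have hswap := hσ _ ha
      fin_cases j <;> fin_cases k <;> simp_all

variable [DecidableEq α] {c : Matching α}

lemma insert (hf : IsOrbitLabelling c.1 τ f) (x : α) :
    IsOrbitLabelling (Matching.insert (c, some x)).1 (_root_.adjoinPair τ)
      (Sum.elim f fun _ => f x) where
  surjective q := (hf.surjective q).imp' Sum.inl fun _ ha => ha
  apply_left z := by
    have hswap : ∀ z : α ⊕ Fin 2, Sum.elim f (fun _ => f x) (swap (Sum.inl x) (Sum.inr 0) z) =
        Sum.elim f (fun _ => f x) z := by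
      rintro (a | j)
      · by_cases ha : a = x <;> simp [swap_apply_def, ha]
      · by_cases hj : j = 0 <;> simp [swap_apply_def, hj]
    have hadjoin : ∀ z, Sum.elim f (fun _ => f x) (_root_.adjoinPair c.1 z) =
        Sum.elim f (fun _ => f x) z := by
      rintro (a | j) <;> simp [hf.apply_left]
    exact (hswap _).trans ((hadjoin _).trans (hswap z))
  apply_right := by rintro (a | j) <;> simp [hf.apply_right]
  mem_of_eq s hσ hτ z w hzw hz := by
    have hlabel : ∀ z : α ⊕ Fin 2,
        Sum.elim f (fun _ => f x) z = f (Sum.elim id (fun _ => x) z) := by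
      rintro (a | j) <;> rfl
    have hretract := Matching.mem_iff_inl_mem_of_insert_invariant hσ hτ
    have hold : ∀ a, Sum.inl a ∈ s → Sum.inl (c.1 a) ∈ s := fun _ =>
      Matching.inl_apply_mem_of_insert_invariant hσ hτ
    rw [hlabel, hlabel] at hzw
    exact (hretract w).2
      (hf.mem_of_eq (Sum.inl ⁻¹' s) hold (fun _ => hτ _) _ _ hzw ((hretract z).1 hz))

end IsOrbitLabelling

/-- The derivation `∑ k, k X_{k+2} ∂/∂X_k`: inserting an interval at one of the `k` points of an
orbit enlarges that orbit by two points. -/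
noncomputable def growth : Derivation ℝ (MvPolynomial ℕ ℝ) (MvPolynomial ℕ ℝ) :=
  MvPolynomial.mkDerivation ℝ fun k => (k : MvPolynomial ℕ ℝ) * MvPolynomial.X (k + 2)

lemma growth_X (k : ℕ) :
    growth (MvPolynomial.X k) = (k : MvPolynomial ℕ ℝ) * MvPolynomial.X (k + 2) :=
  MvPolynomial.mkDerivation_X ℝ _ k

lemma growth_prod_X [DecidableEq Q] (s : Finset Q) (k : Q → ℕ) :
    growth (∏ q ∈ s, MvPolynomial.X (k q)) =
      ∑ q ∈ s, (k q : MvPolynomial ℕ ℝ) *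
        ∏ r ∈ s, MvPolynomial.X (k r + if r = q then 2 else 0) := by
  induction s using Finset.induction_on with
  | empty => simp
  | insert a s ha ih =>
    have hold : ∏ r ∈ s, MvPolynomial.X (k r + if r = a then 2 else 0) =
        ∏ r ∈ s, (MvPolynomial.X (k r) : MvPolynomial ℕ ℝ) :=
      prod_congr rfl fun r hr => by rw [if_neg (ne_of_mem_of_not_mem hr ha), add_zero]
    have hnew : ∀ q ∈ s, MvPolynomial.X (k a) * ((k q : MvPolynomial ℕ ℝ) *
          ∏ r ∈ s, MvPolynomial.X (k r + if r = q then 2 else 0)) =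
        (k q : MvPolynomial ℕ ℝ) *
          ∏ r ∈ Insert.insert a s, MvPolynomial.X (k r + if r = q then 2 else 0) :=
      fun q hq => by
        rw [prod_insert ha, if_neg (ne_of_mem_of_not_mem hq ha).symm, add_zero, mul_left_comm]
    rw [prod_insert ha, Derivation.leibniz, ih, growth_X, sum_insert ha, prod_insert ha, hold,
      if_pos rfl, smul_eq_mul, smul_eq_mul, mul_sum, sum_congr rfl hnew]
    ring

lemma cycleMonomial_adjoinPair [Finite α] (σ τ : Perm α) :
    cycleMonomial (adjoinPair σ) (adjoinPair τ) = MvPolynomial.X 2 * cycleMonomial σ τ := by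
  obtain ⟨Q, _, f, hf⟩ := exists_isOrbitLabelling σ τ
  rw [hf.adjoinPair.cycleMonomial_eq, hf.cycleMonomial_eq, Fintype.prod_option]
  simp only [ncard_preimage_sumElim]
  congr 1
  · simp [Set.preimage]
  · simp [Set.preimage]

lemma sum_cycleMonomial_insert [Fintype α] [DecidableEq α] (c : Matching α) (τ : Perm α) :
    ∑ x, cycleMonomial (Matching.insert (c, some x)).1 (adjoinPair τ) =
      growth (cycleMonomial c.1 τ) := by
  classical
  obtain ⟨Q, _, f, hf⟩ := exists_isOrbitLabelling c.1 τ
  have hinsert : ∀ x, cycleMonomial (Matching.insert (c, some x)).1 (adjoinPair τ) =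
      ∏ r, MvPolynomial.X ((f ⁻¹' {r}).ncard + if r = f x then 2 else 0) := fun x => by
    rw [(hf.insert x).cycleMonomial_eq]
    refine prod_congr rfl fun r _ => ?_
    rw [ncard_preimage_sumElim]
    congr 2
    split_ifs with hr <;> simp [hr, Set.preimage, eq_comm]
  have hfiber : ∀ q, #{x | f x = q} = (f ⁻¹' {q}).ncard := fun q => by
    rw [← Set.ncard_coe_finset, coe_filter_univ]
    rfl
  rw [hf.cycleMonomial_eq, growth_prod_X, sum_congr rfl fun x _ => hinsert x,
    ← sum_fiberwise' univ f fun q =>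
      ∏ r, MvPolynomial.X ((f ⁻¹' {r}).ncard + if r = q then 2 else 0)]
  exact sum_congr rfl fun q _ => by rw [sum_const, nsmul_eq_mul, hfiber]

/-- The sum of the cycle type monomials of all matchings on a configuration of intervals; the cycle
indicator polynomial of cyclations. -/
noncomputable def cycleIndex [Finite α] (τ : Perm α) : MvPolynomial ℕ ℝ :=
  ∑ c : Matching α, cycleMonomial c.1 τ

lemma cycleIndex_permCongr [Finite α] [Finite β] (e : α ≃ β) (τ : Perm α) :
    cycleIndex (e.permCongr τ) = cycleIndex τ :=
  (Fintype.sum_equiv (Matching.congr e) _ _ fun c => (cycleMonomial_permCongr c.1 τ e).symm).symm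

lemma cycleIndex_of_isEmpty [IsEmpty α] (τ : Perm α) : cycleIndex τ = 1 := by
  have : Unique (Matching α) :=
    { default := ⟨1, isEmptyElim, one_mul 1⟩
      uniq := fun _ => Subtype.ext (Subsingleton.elim _ _) }
  rw [cycleIndex, Fintype.sum_unique, cycleMonomial_of_isEmpty]

lemma cycleIndex_adjoinPair [Finite α] (τ : Perm α) :
    cycleIndex (adjoinPair τ) = MvPolynomial.X 2 * cycleIndex τ + growth (cycleIndex τ) := by
  classical
  have := Fintype.ofFinite α
  calc cycleIndex (adjoinPair τ)
      = ∑ p : Matching α × Option α, cycleMonomial (Matching.insert p).1 (adjoinPair τ) :=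
        (Fintype.sum_bijective _ Matching.insert_bijective _ _ fun _ => rfl).symm
    _ = ∑ c : Matching α, (MvPolynomial.X 2 * cycleMonomial c.1 τ +
          growth (cycleMonomial c.1 τ)) := by
        rw [Fintype.sum_prod_type]
        refine sum_congr rfl fun c _ => ?_
        rw [Fintype.sum_option, Matching.insert_none, Matching.coe_adjoin,
          cycleMonomial_adjoinPair, sum_cycleMonomial_insert]
    _ = _ := by rw [sum_add_distrib, ← mul_sum, ← map_sum, ← cycleIndex]

lemma intervalPerm_succ (n : ℕ) :
    intervalPerm (n + 1) =
      (finSumFinEquiv (m := 2 * n) (n := 2)).permCongr (adjoinPair (intervalPerm n)) := by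
  refine (Equiv.symm_apply_eq _).1 (Equiv.ext fun z => ?_)
  refine (Equiv.symm_apply_eq (finSumFinEquiv (m := 2 * n) (n := 2))).2 (Fin.ext ?_)
  rcases z with a | j
  · simp [intervalPerm, Function.Involutive.toPerm]
  · fin_cases j <;> simp [intervalPerm, Function.Involutive.toPerm]

lemma cycleIndex_intervalPerm_succ (n : ℕ) :
    cycleIndex (intervalPerm (n + 1)) =
      MvPolynomial.X 2 * cycleIndex (intervalPerm n) + growth (cycleIndex (intervalPerm n)) := by
  rw [intervalPerm_succ, ← cycleIndex_adjoinPair]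
  exact cycleIndex_permCongr _ _

end Insertion

section TailCoeff

open Finset
open scoped Nat

/-- The cycle index of `n`-cyclations divided by `2 ^ n * n!`, so that the generating function over
`n` is the exponential of `∑ t^k X_{2k} / (2k)`. -/
noncomputable def normalizedCycleIndex (n : ℕ) : MvPolynomial ℕ ℝ :=
  (2 ^ n * n ! : ℝ)⁻¹ • cycleIndex (intervalPerm n)

lemma normalizedCycleIndex_zero : normalizedCycleIndex 0 = 1 := by
  simp [normalizedCycleIndex, cycleIndex_of_isEmpty]

lemma normalizedCycleIndex_succ (n : ℕ) :
    2 * ((n : MvPolynomial ℕ ℝ) + 1) * normalizedCycleIndex (n + 1) =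
      MvPolynomial.X 2 * normalizedCycleIndex n + growth (normalizedCycleIndex n) := by
  have hscalar : 2 * ((n : MvPolynomial ℕ ℝ) + 1) = MvPolynomial.C (2 * (n + 1) : ℝ) := by
    simp only [map_mul, map_add, map_natCast, map_ofNat, map_one]
  have hfactor : (2 * (n + 1) : ℝ) * (2 ^ (n + 1) * (n + 1)! : ℝ)⁻¹ = (2 ^ n * n ! : ℝ)⁻¹ := by
    rw [Nat.factorial_succ]
    push_cast
    field_simp
    ring
  rw [hscalar, ← MvPolynomial.smul_eq_C_mul, normalizedCycleIndex, smul_smul, hfactor,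
    cycleIndex_intervalPerm_succ, normalizedCycleIndex, Derivation.map_smul, mul_smul_comm,
    smul_add]

lemma normalizedCycleIndex_recurrence (n : ℕ) :
    2 * ((n : MvPolynomial ℕ ℝ) + 1) * normalizedCycleIndex (n + 1) =
      ∑ ij ∈ antidiagonal n, MvPolynomial.X (2 * ij.1 + 2) * normalizedCycleIndex ij.2 := by
  refine sum_antidiagonal_of_derivation growth two_ne_zero
    (a := fun i => MvPolynomial.X (2 * i + 2)) (fun i => ?_) ?_ normalizedCycleIndex_succ n
  · rw [growth_X]
    push_cast
    ring_nf
  · rw [normalizedCycleIndex_zero, Derivation.map_one_eq_zero]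

/-- The number of `n`-cyclations all of whose cycles are longer than `l`, divided by `2 ^ n * n!`;
the coefficient of `t^n` in the exponential of `∑ t^k / (2k)` over `k > l`. -/
noncomputable def tailCoeff (n l : ℕ) : ℝ :=
  Nat.card {c : Cyclation n //
    ∀ x : Fin (2 * n), l < (MulAction.orbit (cycGroup c) x).ncard / 2} / (2 ^ n * n !)

lemma eval_cycleMonomial {α : Type*} [Finite α] (σ τ : Equiv.Perm α) (p : ℕ → Prop)
    [DecidablePred p]
    [Decidable (∀ x : α, p (MulAction.orbit (Subgroup.closure {σ, τ}) x).ncard)] :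
    MvPolynomial.eval (fun k => if p k then (1 : ℝ) else 0) (cycleMonomial σ τ) =
      if ∀ x : α, p (MulAction.orbit (Subgroup.closure {σ, τ}) x).ncard then 1 else 0 := by
  have := Fintype.ofFinite (MulAction.orbitRel.Quotient (Subgroup.closure {σ, τ}) α)
  rw [cycleMonomial, finprod_eq_prod_of_fintype, map_prod]
  simp only [MvPolynomial.eval_X]
  rw [Fintype.prod_boole]
  exact if_congr (Quotient.mk''_surjective.forall) rfl rfl

lemma tailCoeff_eq_eval (n l : ℕ) :
    tailCoeff n l =
      MvPolynomial.eval (fun k => if l < k / 2 then 1 else 0) (normalizedCycleIndex n) := by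
  classical
  have hcount : MvPolynomial.eval (fun k => if l < k / 2 then (1 : ℝ) else 0)
      (cycleIndex (intervalPerm n)) =
        #{c : Cyclation n | ∀ x : Fin (2 * n), l < (MulAction.orbit (cycGroup c) x).ncard / 2} := by
    rw [cycleIndex, map_sum, ← sum_boole]
    exact sum_congr rfl fun c _ => eval_cycleMonomial c.1 (intervalPerm n) fun k => l < k / 2
  rw [normalizedCycleIndex, MvPolynomial.smul_eval, hcount, tailCoeff, div_eq_inv_mul,
    Nat.card_eq_fintype_card, Fintype.card_subtype]

lemma tailCoeff_recurrence (n l : ℕ) :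
    2 * (n + 1) * tailCoeff (n + 1) l =
      ∑ ij ∈ antidiagonal n, (if l ≤ ij.1 then 1 else 0) * tailCoeff ij.2 l := by
  have h := congrArg (MvPolynomial.eval fun k => if l < k / 2 then (1 : ℝ) else 0)
    (normalizedCycleIndex_recurrence n)
  have hhalf : ∀ i, (2 * i + 2) / 2 = i + 1 := fun i => by omega
  simpa [tailCoeff_eq_eval, hhalf, Nat.lt_succ_iff] using h

lemma tailCoeff_zero (l : ℕ) : tailCoeff 0 l = 1 := by
  rw [tailCoeff_eq_eval, normalizedCycleIndex_zero, map_one]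

lemma tailCoeff_nonneg (n l : ℕ) : 0 ≤ tailCoeff n l := by
  rw [tailCoeff]
  positivity

lemma tailCoeff_le_tailCoeff_zero (n l : ℕ) : tailCoeff n l ≤ tailCoeff n 0 := by
  rw [tailCoeff, tailCoeff]
  gcongr
  exact Nat.card_mono (Set.toFinite _) fun c hc x => (Nat.zero_le l).trans_lt (hc x)

lemma tailCoeff_recurrence_range (n l : ℕ) :
    2 * (n + 1) * tailCoeff (n + 1) l = ∑ j ∈ range (n + 1 - l), tailCoeff j l := by
  rw [tailCoeff_recurrence, Nat.sum_antidiagonal_eq_sum_range_succ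
    (fun i j => (if l ≤ i then 1 else 0) * tailCoeff j l), ← sum_range_reflect,
    ← sum_subset (range_subset_range.2 (Nat.sub_le (n + 1) l))]
  · refine sum_congr rfl fun j hj => ?_
    have hj := mem_range.1 hj
    rw [if_pos (by omega), one_mul]
    congr 1
    omega
  · intro j hj hj'
    rw [mem_range] at hj hj'
    rw [if_neg (by omega), zero_mul]

lemma tailCoeff_succ_eq_zero {n l : ℕ} (h : n < l) : tailCoeff (n + 1) l = 0 := by
  have hrec := tailCoeff_recurrence_range n l
  rw [Nat.sub_eq_zero_of_le h, sum_range_zero] at hrec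
  exact (mul_eq_zero.1 hrec).resolve_left (by positivity)

lemma tailCoeff_step {n l : ℕ} (h : l ≤ n) :
    2 * (n + 1) * tailCoeff (n + 1) l = 2 * n * tailCoeff n l + tailCoeff (n - l) l := by
  rw [tailCoeff_recurrence_range, Nat.sub_add_comm h, sum_range_succ]
  congr 1
  cases n with
  | zero => simp [Nat.le_zero.1 h]
  | succ n => exact_mod_cast (tailCoeff_recurrence_range n l).symm

lemma tailCoeff_succ_zero (n : ℕ) :
    2 * (n + 1) * tailCoeff (n + 1) 0 = (2 * n + 1) * tailCoeff n 0 := by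
  rw [tailCoeff_step n.zero_le, Nat.sub_zero]
  ring

lemma tailCoeff_zero_right (n : ℕ) : tailCoeff n 0 = 1 / 4 ^ n * Nat.choose (2 * n) n := by
  induction n with
  | zero => simp [tailCoeff_zero]
  | succ n ih =>
    have hbinom : ((n : ℝ) + 1) * Nat.choose (2 * (n + 1)) (n + 1) =
        2 * (2 * n + 1) * Nat.choose (2 * n) n := by
      exact_mod_cast Nat.succ_mul_centralBinom_succ n
    have hstep := tailCoeff_succ_zero n
    refine mul_left_cancel₀ (by positivity : (2 * (n + 1) : ℝ) ≠ 0) ?_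
    rw [hstep, ih, pow_succ]
    linear_combination (-1 / (2 * 4 ^ n) : ℝ) * hbinom

lemma tailCoeff_zero_right_pos (n : ℕ) : 0 < tailCoeff n 0 := by
  have hbinom : 0 < Nat.choose (2 * n) n := Nat.choose_pos (by omega)
  rw [tailCoeff_zero_right]
  positivity

end TailCoeff

section Trapezoid

open PowerSeries

/-- The generating function `∑ tailCoeff n l t^n`, i.e. the exponential of `∑ t^k / (2k)` over
`k > l`. -/
noncomputable def tailSeries (l : ℕ) : ℝ⟦X⟧ :=
  PowerSeries.mk fun n => tailCoeff n l

lemma coeff_tailSeries (n l : ℕ) : coeff n (tailSeries l) = tailCoeff n l :=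
  coeff_mk n _

lemma nonnegCoeff_tailSeries (l : ℕ) : NonnegCoeff (tailSeries l) := fun n =>
  (tailCoeff_nonneg n l).trans_eq (coeff_tailSeries n l).symm

lemma constantCoeff_tailSeries (l : ℕ) : constantCoeff (tailSeries l) = 1 := by
  rw [← coeff_zero_eq_constantCoeff_apply, coeff_tailSeries, tailCoeff_zero]

lemma derivative_tailSeries (l : ℕ) :
    d⁄dX ℝ (tailSeries l) =
      (PowerSeries.mk fun i => if l ≤ i then 2⁻¹ else 0) * tailSeries l := by
  ext n
  have hrec := tailCoeff_recurrence n l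
  rw [coeff_derivative, coeff_mul, coeff_tailSeries]
  simp only [coeff_mk, coeff_tailSeries]
  calc tailCoeff (n + 1) l * (n + 1) = 2⁻¹ * (2 * (n + 1) * tailCoeff (n + 1) l) := by ring
    _ = _ := by
      rw [hrec, Finset.mul_sum]
      exact Finset.sum_congr rfl fun ij _ => by split_ifs <;> ring

lemma derivative_C_mul_X_pow_succ (l : ℕ) :
    d⁄dX ℝ (C (2 * (l + 1) : ℝ)⁻¹ * X ^ (l + 1)) =
      PowerSeries.mk (fun i => if l ≤ i then (2⁻¹ : ℝ) else 0) -
        PowerSeries.mk (fun i => if l + 1 ≤ i then (2⁻¹ : ℝ) else 0) := by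
  ext n
  rw [coeff_derivative, coeff_C_mul, coeff_X_pow, map_sub, coeff_mk, coeff_mk]
  rcases lt_trichotomy n l with h | rfl | h
  · simp [h.ne, h.not_ge, (h.trans l.lt_succ_self).not_ge]
  · simp only [mul_inv_rev, if_pos, le_refl, mul_one, Nat.not_succ_le_self, if_neg,
      not_false_eq_true, sub_zero]
    field_simp
  · simp [h.ne', h.le, Nat.succ_le_of_lt h]

lemma nonnegCoeff_tailSeries_trapezoid (l : ℕ) :
    NonnegCoeff (C (2 * (l + 1) : ℝ)⁻¹ * X ^ (l + 1) * (tailSeries l + tailSeries (l + 1)) -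
      2 * (tailSeries l - tailSeries (l + 1))) := by
  set y : ℝ⟦X⟧ := C (2 * (l + 1) : ℝ)⁻¹ * X ^ (l + 1) with hy
  have hV0 : constantCoeff (tailSeries (l + 1)) ≠ 0 := by simp [constantCoeff_tailSeries]
  have hynonneg : NonnegCoeff y := fun n => by
    rw [hy, coeff_C_mul, coeff_X_pow]
    positivity
  obtain ⟨E, hE⟩ : ∃ E, E = tailSeries l * (tailSeries (l + 1))⁻¹ := ⟨_, rfl⟩
  have hE0 : constantCoeff E = 1 := by simp [hE, constantCoeff_tailSeries]
  have hderiv : d⁄dX ℝ E = d⁄dX ℝ y * E := by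
    rw [hE, hy, derivative_C_mul_X_pow_succ]
    exact derivative_mul_inv_eq_mul hV0 (derivative_tailSeries l) (derivative_tailSeries (l + 1))
  have hquotient : E * tailSeries (l + 1) = tailSeries l := by
    rw [hE, mul_assoc, PowerSeries.inv_mul_cancel _ hV0, mul_one]
  have htrapezoid := (hynonneg.trapezoid (by simp [hy]) hE0 hderiv).mul
    (nonnegCoeff_tailSeries (l + 1))
  convert htrapezoid using 1
  linear_combination (2 - y) * hquotient

lemma tailCoeff_trapezoid (m l : ℕ) :
    4 * (l + 1) * (tailCoeff (m + (l + 1)) l - tailCoeff (m + (l + 1)) (l + 1)) ≤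
      tailCoeff m l + tailCoeff m (l + 1) := by
  have h := nonnegCoeff_tailSeries_trapezoid l (m + (l + 1))
  rw [map_sub, mul_assoc, coeff_C_mul, coeff_X_pow_mul, map_add, ← map_ofNat (C (R := ℝ)),
    coeff_C_mul, map_sub] at h
  simp only [coeff_tailSeries] at h
  rw [sub_nonneg, ← div_eq_inv_mul, le_div_iff₀ (by positivity)] at h
  linarith

end Trapezoid

section Monotonicity

open Finset

lemma tailCoeff_zero_right_antitone : Antitone fun n => tailCoeff n 0 :=
  antitone_nat_of_succ_le fun n => by
    have hstep := tailCoeff_succ_zero n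
    have hpos := tailCoeff_zero_right_pos n
    refine le_of_mul_le_mul_left ?_ (by positivity : (0 : ℝ) < 2 * (n + 1))
    linarith

lemma mul_sq_tailCoeff_zero_right_monotone : Monotone fun n : ℕ => n * tailCoeff n 0 ^ 2 :=
  monotone_nat_of_le_succ fun n => by
    have hstep : tailCoeff (n + 1) 0 = (2 * n + 1) / (2 * (n + 1)) * tailCoeff n 0 := by
      field_simp
      linarith [tailCoeff_succ_zero n]
    have hratio : (n : ℝ) ≤ (n + 1) * ((2 * n + 1) / (2 * (n + 1))) ^ 2 := by
      field_simp
      nlinarith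
    calc (n : ℝ) * tailCoeff n 0 ^ 2
        ≤ (n + 1) * ((2 * n + 1) / (2 * (n + 1))) ^ 2 * tailCoeff n 0 ^ 2 := by gcongr
      _ = (n + 1 : ℕ) * tailCoeff (n + 1) 0 ^ 2 := by
        rw [hstep]
        push_cast
        ring

lemma two_mul_tailCoeff_zero_right_le {k n : ℕ} (hk : 0 < k) (hkn : k ≤ n) (hn : n ≤ 2 * k) :
    2 * tailCoeff k 0 ≤ 3 * tailCoeff n 0 := by
  have hsq : (k : ℝ) * tailCoeff k 0 ^ 2 ≤ k * (2 * tailCoeff n 0 ^ 2) :=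
    calc (k : ℝ) * tailCoeff k 0 ^ 2 ≤ n * tailCoeff n 0 ^ 2 :=
          mul_sq_tailCoeff_zero_right_monotone hkn
      _ ≤ (2 * k : ℕ) * tailCoeff n 0 ^ 2 := by gcongr
      _ = k * (2 * tailCoeff n 0 ^ 2) := by push_cast; ring
  have hsq' := le_of_mul_le_mul_left hsq (by exact_mod_cast hk)
  have hn0 := tailCoeff_nonneg n 0
  refine (pow_le_pow_iff_left₀ (mul_nonneg zero_le_two (tailCoeff_nonneg k 0)) (by positivity)
    two_ne_zero).1 ?_
  linarith [sq_nonneg (tailCoeff n 0)]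

lemma tailCoeff_sub_succ_le (m l : ℕ) :
    tailCoeff m l - tailCoeff (m + 1) l ≤ 2 * (tailCoeff m 0 - tailCoeff (m + 1) 0) := by
  have hzero := tailCoeff_succ_zero m
  have htail : 2 * m * tailCoeff m l ≤ 2 * (m + 1) * tailCoeff (m + 1) l := by
    rcases le_or_gt l m with h | h
    · rw [tailCoeff_step h]
      exact le_add_of_nonneg_right (tailCoeff_nonneg _ _)
    · cases m with
      | zero => simp [tailCoeff_succ_eq_zero h]
      | succ m =>
        rw [tailCoeff_succ_eq_zero h, tailCoeff_succ_eq_zero (m.lt_succ_self.trans h)]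
        simp
  refine le_of_mul_le_mul_left ?_ (by positivity : (0 : ℝ) < 2 * (m + 1))
  linarith [tailCoeff_le_tailCoeff_zero m l]

lemma sum_range_tailCoeff_sub_le {N K : ℕ} (h : K ≤ N) :
    ∑ l ∈ range (K + 1), (tailCoeff (N - l) l - tailCoeff (N - l) (l + 1)) ≤
      2 * tailCoeff (N - K) 0 - tailCoeff N 0 - tailCoeff (N - K) (K + 1) := by
  induction K with
  | zero =>
    rw [zero_add, sum_range_one, Nat.sub_zero]
    linarith
  | succ K ih =>
    have hdecrement := tailCoeff_sub_succ_le (N - (K + 1)) (K + 1)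
    rw [show N - (K + 1) + 1 = N - K by omega] at hdecrement
    rw [sum_range_succ]
    linarith [ih (by omega)]

lemma sum_tailCoeff_sub_le (N : ℕ) :
    ∑ l ∈ range (N + 1), (tailCoeff (N - l) l - tailCoeff (N - l) (l + 1)) ≤
      2 * tailCoeff (N + 1) 0 := by
  rcases N.eq_zero_or_pos with rfl | hN
  · simpa [tailCoeff_zero] using tailCoeff_nonneg 1 0
  obtain ⟨K, hK⟩ : ∃ K, N = 2 * K + 1 ∨ N = 2 * K + 2 := ⟨(N - 1) / 2, by omega⟩
  have hvanish : ∀ l ∈ range (N + 1), l ∉ range (K + 1) →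
      tailCoeff (N - l) l - tailCoeff (N - l) (l + 1) = 0 := fun l hl hlK => by
    rw [mem_range] at hl hlK
    cases hm : N - l with
    | zero => rw [tailCoeff_zero, tailCoeff_zero, sub_self]
    | succ m => rw [tailCoeff_succ_eq_zero (by omega), tailCoeff_succ_eq_zero (by omega), sub_self]
  rw [← sum_subset (range_subset_range.2 (by omega : K + 1 ≤ N + 1)) hvanish]
  have hpartial := sum_range_tailCoeff_sub_le (by omega : K ≤ N)
  have hratio : 2 * tailCoeff (N - K) 0 ≤ 3 * tailCoeff (N + 1) 0 :=
    two_mul_tailCoeff_zero_right_le (by omega) (by omega) (by omega)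
  have hanti : tailCoeff (N + 1) 0 ≤ tailCoeff N 0 := tailCoeff_zero_right_antitone N.le_succ
  linarith [tailCoeff_nonneg (N - K) (K + 1)]

lemma sum_range_succ_mul_sub {R : Type*} [CommRing R] (f : ℕ → R) (n : ℕ) :
    ∑ l ∈ range n, ((l : R) + 1) * (f l - f (l + 1)) = ∑ l ∈ range n, f l - n * f n := by
  induction n with
  | zero => simp
  | succ n ih =>
    rw [sum_range_succ, sum_range_succ, ih]
    push_cast
    ring

lemma two_mul_sum_tailCoeff_le (N : ℕ) :
    2 * ∑ l ∈ range (N + 1), tailCoeff (N + 1) l ≤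
      ∑ l ∈ range (N + 2), tailCoeff (N + 1 - l) l := by
  have htrapezoid : ∀ l ∈ range (N + 1),
      4 * ((l + 1) * (tailCoeff (N + 1) l - tailCoeff (N + 1) (l + 1))) ≤
        tailCoeff (N - l) l + tailCoeff (N - l) (l + 1) := fun l hl => by
    have h := tailCoeff_trapezoid (N - l) l
    rwa [show N - l + (l + 1) = N + 1 by have := mem_range.1 hl; omega, mul_assoc] at h
  have habel := sum_range_succ_mul_sub (fun l => tailCoeff (N + 1) l) (N + 1)
  rw [tailCoeff_succ_eq_zero N.lt_succ_self, mul_zero, sub_zero] at habel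
  have hupper := sum_le_sum htrapezoid
  rw [← mul_sum, habel, sum_add_distrib] at hupper
  have hdiff := sum_tailCoeff_sub_le N
  rw [sum_sub_distrib] at hdiff
  rw [sum_range_succ' _ (N + 1)]
  simp only [Nat.add_sub_add_right, Nat.sub_zero]
  linarith

lemma sum_tailCoeff_le_succ (N : ℕ) :
    ∑ l ∈ range (N + 1), tailCoeff (N + 1) l ≤ ∑ l ∈ range (N + 2), tailCoeff (N + 2) l := by
  have hstep : 2 * (N + 2) * ∑ l ∈ range (N + 2), tailCoeff (N + 2) l =
      2 * (N + 1) * ∑ l ∈ range (N + 1), tailCoeff (N + 1) l +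
        ∑ l ∈ range (N + 2), tailCoeff (N + 1 - l) l := by
    have hdiag : ∑ l ∈ range (N + 1), tailCoeff (N + 1) l =
        ∑ l ∈ range (N + 2), tailCoeff (N + 1) l := by
      rw [sum_range_succ _ (N + 1), tailCoeff_succ_eq_zero N.lt_succ_self, add_zero]
    rw [hdiag, mul_sum, mul_sum, ← sum_add_distrib]
    refine sum_congr rfl fun l hl => ?_
    have h := tailCoeff_step (Nat.lt_succ_iff.1 (mem_range.1 hl))
    push_cast at h
    rw [← h]
    ring
  refine le_of_mul_le_mul_left ?_ (by positivity : (0 : ℝ) < 2 * (N + 2))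
  linarith [two_mul_sum_tailCoeff_le N]

end Monotonicity

section ShortestCycle

open Finset
open scoped Nat

variable {n : ℕ}

lemma lt_shortestCycle_iff (hn : 1 ≤ n) (c : Cyclation n) (l : ℕ) :
    l < shortestCycle c ↔ ∀ x : Fin (2 * n), l < (MulAction.orbit (cycGroup c) x).ncard / 2 := by
  have : Nonempty (Fin (2 * n)) := ⟨⟨0, by omega⟩⟩
  rw [← Nat.succ_le_iff, shortestCycle,
    le_csInf_iff (OrderBot.bddBelow _) (Set.range_nonempty _), Set.forall_mem_range]
  rfl

lemma shortestCycle_le (c : Cyclation n) : shortestCycle c ≤ n := by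
  rcases n.eq_zero_or_pos with rfl | hn
  · simp [shortestCycle]
  by_contra! h
  have hlt := (lt_shortestCycle_iff hn c n).1 h ⟨0, by omega⟩
  have hcard := Set.ncard_le_card (MulAction.orbit (cycGroup c) (⟨0, by omega⟩ : Fin (2 * n)))
  rw [Nat.card_fin] at hcard
  omega

lemma shortestCycle_pos (hn : 1 ≤ n) (c : Cyclation n) : 0 < shortestCycle c := by
  refine (lt_shortestCycle_iff hn c 0).2 fun x => ?_
  have hmem : c.1 x ∈ MulAction.orbit (cycGroup c) x :=
    ⟨⟨c.1, Subgroup.subset_closure (by simp)⟩, rfl⟩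
  have hcard : 1 < (MulAction.orbit (cycGroup c) x).ncard :=
    (Set.one_lt_ncard).2 ⟨_, hmem, x, MulAction.mem_orbit_self x, c.2.1 x⟩
  omega

lemma tailCoeff_eq_card_shortestCycle (hn : 1 ≤ n) (l : ℕ) :
    tailCoeff n l = #{c : Cyclation n | l < shortestCycle c} / (2 ^ n * n !) := by
  classical
  rw [tailCoeff, ← Fintype.card_subtype, ← Nat.card_eq_fintype_card]
  simp only [lt_shortestCycle_iff hn]

lemma sum_shortestCycle (n : ℕ) :
    ∑ c : Cyclation n, (shortestCycle c : ℝ) =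
      ∑ l ∈ range n, (#{c : Cyclation n | l < shortestCycle c} : ℝ) := by
  have hlayer : ∀ c : Cyclation n, {l ∈ range n | l < shortestCycle c} = range (shortestCycle c) :=
    fun c => by
      ext l
      simp only [mem_filter, mem_range]
      exact and_iff_right_of_imp fun hl => hl.trans_le (shortestCycle_le c)
  have hswap := sum_card_bipartiteAbove_eq_sum_card_bipartiteBelow (s := univ) (t := range n)
    fun (c : Cyclation n) l => l < shortestCycle c
  simp only [bipartiteAbove, bipartiteBelow, hlayer, card_range] at hswap
  exact_mod_cast hswap

lemma tailCoeff_zero_mul_ExT (hn : 1 ≤ n) :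
    tailCoeff n 0 * ExT n = ∑ l ∈ range n, tailCoeff n l := by
  have htotal : tailCoeff n 0 = Fintype.card (Cyclation n) / (2 ^ n * n !) := by
    rw [tailCoeff_eq_card_shortestCycle hn, filter_true_of_mem fun c _ => shortestCycle_pos hn c,
      card_univ]
  have hne : (Fintype.card (Cyclation n) : ℝ) ≠ 0 := fun h => by
    have hpos := tailCoeff_zero_right_pos n
    rw [htotal, h, zero_div] at hpos
    exact hpos.false
  rw [htotal, ExT, sum_shortestCycle, sum_congr rfl fun l _ => tailCoeff_eq_card_shortestCycle hn l,
    ← sum_div]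
  field_simp

end ShortestCycle

/-- For every `n ≥ 1`, `(2n+2)·Ex[T_n] ≤ (2n+1)·Ex[T_{n+1}]`; equivalently the sequence
`(1/4^n)·binom(2n,n)·Ex[T_n]` is nondecreasing in `n`. -/
theorem expected_shortest_cycle_monotone (n : ℕ) (hn : 1 ≤ n) :
    (2 * (n : ℝ) + 2) * ExT n ≤ (2 * (n : ℝ) + 1) * ExT (n + 1) ∧
    (1 / 4 ^ n : ℝ) * Nat.choose (2 * n) n * ExT n
      ≤ (1 / 4 ^ (n + 1) : ℝ) * Nat.choose (2 * (n + 1)) (n + 1) * ExT (n + 1) := by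
  have hmono : tailCoeff n 0 * ExT n ≤ tailCoeff (n + 1) 0 * ExT (n + 1) := by
    obtain ⟨N, rfl⟩ := Nat.exists_eq_add_of_le' hn
    rw [tailCoeff_zero_mul_ExT hn, tailCoeff_zero_mul_ExT (Nat.le_add_left 1 _)]
    exact sum_tailCoeff_le_succ N
  refine ⟨le_of_mul_le_mul_left ?_ (tailCoeff_zero_right_pos n), ?_⟩
  · calc tailCoeff n 0 * ((2 * n + 2) * ExT n)
        = 2 * (n + 1) * (tailCoeff n 0 * ExT n) := by ring
      _ ≤ 2 * (n + 1) * (tailCoeff (n + 1) 0 * ExT (n + 1)) := by gcongr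
      _ = tailCoeff n 0 * ((2 * n + 1) * ExT (n + 1)) := by
        linear_combination ExT (n + 1) * tailCoeff_succ_zero n
  · rwa [tailCoeff_zero_right, tailCoeff_zero_right] at hmono
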